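/- Let (V, w, d) be a finite weighted metric space and k ≥ 1 an integer with k ≤ |V|. For subsets U, X ⊆ V with X nonempty, define OPT_k(U, X) := min over S ⊆ X with |S| = k of ∑_{x∈U} w(x)·d(x,S), and write OPT_k(U) := OPT_k(U, U). Then for any nonempty subset U ⊆ V with |U| ≥ k, OPT_k(U) ≤ 2·OPT_k(U, V). -/

import Mathlib

/-!
Given any set `S` of `k` centers, move each `s ∈ S` to a point `p s` of `U` nearest to `s`. For
`x ∈ U` we have `d(s, p s) ≤ d(s, x)`, so the triangle inequality gives `d(x, p s) ≤ 2 d(x, s)`: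
the moved centers serve every point of `U` at most twice as expensively as `S`
(`exists_centers_in`). The moved centers may coincide, but since `k ≤ |U|` they can be completed to
exactly `k` points of `U`, and adding centers only decreases distances.
-/

open Finset

/-- Distance from a point to a (nonempty) finite set: `min_{y ∈ S} d(x,y)`. -/
noncomputable def distToSet {V : Type*} [MetricSpace V] (x : V) (S : Finset V) : ℝ :=
  sInf ((fun y => dist x y) '' ↑S)

/-- `k`-median cost of a center set `S` with respect to the point set `U`:
`∑_{x ∈ U} w(x) · d(x, S)`. -/
noncomputable def kCost {V : Type*} [MetricSpace V] (w : V → NNReal) (S U : Finset V) : ℝ :=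
  ∑ x ∈ U, (w x : ℝ) * distToSet x S

/-- `OPT_k(U, X)`: minimum over `S ⊆ X` with `|S| = k` of `kCost w S U`. -/
noncomputable def kOPT {V : Type*} [MetricSpace V] (w : V → NNReal) (k : ℕ) (U X : Finset V) : ℝ :=
  sInf {c : ℝ | ∃ S : Finset V, S ⊆ X ∧ S.card = k ∧ c = kCost w S U}

theorem distToSet_le {V : Type*} [MetricSpace V] {x y : V} {S : Finset V} (hy : y ∈ S) :
    distToSet x S ≤ dist x y :=
  csInf_le ⟨0, by rintro _ ⟨z, _, rfl⟩; exact dist_nonneg⟩ ⟨y, hy, rfl⟩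

theorem distToSet_nonneg {V : Type*} [MetricSpace V] (x : V) (S : Finset V) :
    0 ≤ distToSet x S :=
  Real.sInf_nonneg (by rintro _ ⟨z, _, rfl⟩; exact dist_nonneg)

/-- The infimum defining `distToSet` is attained. -/
theorem exists_distToSet_eq {V : Type*} [MetricSpace V] (x : V) {S : Finset V}
    (hS : S.Nonempty) : ∃ y ∈ S, distToSet x S = dist x y := by
  have hne : ((fun y => dist x y) '' (S : Set V)).Nonempty := hS.to_set.image _
  obtain ⟨y, hy, hxy⟩ := hne.csInf_mem (S.finite_toSet.image _)
  exact ⟨y, hy, hxy.symm⟩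

theorem kCost_nonneg {V : Type*} [MetricSpace V] (w : V → NNReal) (S U : Finset V) :
    0 ≤ kCost w S U :=
  Finset.sum_nonneg fun x _ => mul_nonneg (w x).coe_nonneg (distToSet_nonneg x S)

theorem kOPT_le {V : Type*} [MetricSpace V] (w : V → NNReal) {k : ℕ} {S U X : Finset V}
    (hSX : S ⊆ X) (hS : S.card = k) : kOPT w k U X ≤ kCost w S U :=
  csInf_le ⟨0, by rintro _ ⟨T, _, _, rfl⟩; exact kCost_nonneg w T U⟩ ⟨S, hSX, hS, rfl⟩

/-- Replacing centers by nearest points of `U` costs at most a factor of two. -/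
theorem exists_centers_in {V : Type*} [MetricSpace V] (w : V → NNReal) {S U : Finset V}
    (hS : S.Nonempty) (hU : U.Nonempty) (hSU : S.card ≤ U.card) :
    ∃ T ⊆ U, T.card = S.card ∧ kCost w T U ≤ 2 * kCost w S U := by
  classical
  choose p hpU hp using fun s : V => U.exists_min_image (fun u => dist s u) hU
  have hsub : S.image p ⊆ U := Finset.image_subset_iff.2 fun s _ => hpU s
  obtain ⟨T, hT, hTU, hcard⟩ :=
    Finset.exists_subsuperset_card_eq hsub Finset.card_image_le hSU
  refine ⟨T, hTU, hcard, ?_⟩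
  unfold kCost
  rw [Finset.mul_sum]
  refine Finset.sum_le_sum fun x hx => ?_
  obtain ⟨s, hs, hxs⟩ := exists_distToSet_eq x hS
  have h1 : distToSet x T ≤ dist x (p s) := distToSet_le (hT (Finset.mem_image_of_mem p hs))
  have h2 : dist s (p s) ≤ dist x s := (hp s x hx).trans_eq (dist_comm s x)
  have h3 : distToSet x T ≤ 2 * distToSet x S := by
    linarith [dist_triangle x s (p s)]
  calc (w x : ℝ) * distToSet x T ≤ w x * (2 * distToSet x S) :=
        mul_le_mul_of_nonneg_left h3 (w x).coe_nonneg
    _ = 2 * (w x * distToSet x S) := by ring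

/-- `OPT_k(U) ≤ 2 · OPT_k(U, V)`. -/
theorem opt_restricted_le_two_opt {V : Type*} [Fintype V] [MetricSpace V]
    (w : V → NNReal) (k : ℕ) (hk : 1 ≤ k) (hkV : k ≤ Fintype.card V)
    (U : Finset V) (hU : U.Nonempty) (hUk : k ≤ U.card) :
    kOPT w k U U ≤ 2 * kOPT w k U Finset.univ := by
  have h : kOPT w k U U / 2 ≤ kOPT w k U Finset.univ := by
    refine le_csInf ?_ ?_
    · obtain ⟨S, hS, hc⟩ := Finset.exists_subset_card_eq hUk
      exact ⟨_, S, Finset.subset_univ S, hc, rfl⟩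
    · rintro _ ⟨S, _, rfl, rfl⟩
      obtain ⟨T, hTU, hc, hle⟩ := exists_centers_in w (Finset.card_pos.1 hk) hU hUk
      linarith [kOPT_le w (U := U) hTU hc]
  linarith
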